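/- Let (L, [·,·], α, β) be a BiHom-Lie superalgebra over a field k with α and β bijective. Then L is BiHom-Lie admissible as a BiHom-superalgebra with multiplication μ = [·,·]; that is, the bracket [x, y]' = [x, y] − (−1)^{|x||y|}[α⁻¹(β(y)), α(β⁻¹(x))] satisfies the BiHom-superJacobi identity (−1)^{|x||z|}[β²(x), [β(y), α(z)]']' + (−1)^{|y||x|}[β²(y), [β(z), α(x)]']' + (−1)^{|z||y|}[β²(z), [β(x), α(y)]']' = 0 for all homogeneous x, y, z ∈ L. (Proposition 3.3) -/

import Mathlib

/-- The supercommutator of a bracket `b` of a BiHom-superalgebra with bijective structure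
maps `α`, `β`, defined on elements of parities `i`, `j` by
`[x, y]' = b x y − (−1)^{|x||y|} b (α⁻¹(β(y))) (α(β⁻¹(x)))`. -/
noncomputable def superComm {K : Type*} [Field K] {A : Type*} [AddCommGroup A] [Module K A]
    (b : A →ₗ[K] A →ₗ[K] A) (α β : A ≃ₗ[K] A) (i j : ZMod 2) (x y : A) : A :=
  b x y - ((-1 : K) ^ (i.val * j.val)) • b (α.symm (β y)) (α (β.symm x))

/-!
Since `α` and `β` commute, the supercommutator of `β x` and `α y` is
`[β x, α y] − (−1)^{|x||y|}[β y, α x]`, whose two terms agree by BiHom-skew-supersymmetry. Bijective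
even maps have even inverses, so every pair of homogeneous elements is of this form and
`[·,·]' = 2[·,·]`. The BiHom-superJacobi expression of `[·,·]'` is thus `4` times that of `[·,·]`.
-/

section Grading

variable {ι M N σ τ F : Type*} [DecidableEq ι] [AddCommMonoid M] [AddCommMonoid N]
  [SetLike σ M] [AddSubmonoidClass σ M] [SetLike τ N] [AddSubmonoidClass τ N]
  (ℳ : ι → σ) (𝒩 : ι → τ) [DirectSum.Decomposition ℳ] [DirectSum.Decomposition 𝒩]
  [FunLike F M N] [AddMonoidHomClass F M N] {f : F}

theorem map_coe_decompose (hf : ∀ i, ∀ x ∈ ℳ i, f x ∈ 𝒩 i) (x : M) (i : ι) :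
    f (DirectSum.decompose ℳ x i) = DirectSum.decompose 𝒩 (f x) i := by
  induction x using DirectSum.Decomposition.inductionOn ℳ with
  | zero => simp
  | @homogeneous j m =>
    have hfm : f m ∈ 𝒩 j := hf j m m.2
    obtain rfl | hji := eq_or_ne j i
    · rw [DirectSum.decompose_of_mem_same ℳ m.2, DirectSum.decompose_of_mem_same 𝒩 hfm]
    · rw [DirectSum.decompose_of_mem_ne ℳ m.2 hji, DirectSum.decompose_of_mem_ne 𝒩 hfm hji,
        map_zero]
  | add x y hx hy =>
    simp only [map_add, DirectSum.decompose_add, DirectSum.add_apply, AddMemClass.coe_add, hx, hy]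

theorem mem_of_map_mem_of_injective (hf : ∀ i, ∀ x ∈ ℳ i, f x ∈ 𝒩 i)
    (hinj : Function.Injective f) {i : ι} {x : M} (hx : f x ∈ 𝒩 i) : x ∈ ℳ i := by
  have hcomp : (DirectSum.decompose ℳ x i : M) = x :=
    hinj <| by rw [map_coe_decompose ℳ 𝒩 hf, DirectSum.decompose_of_mem_same 𝒩 hx]
  exact hcomp ▸ (DirectSum.decompose ℳ x i).2

end Grading

section SuperComm

variable {K : Type*} [Field K] {L : Type*} [AddCommGroup L] [Module K L]
  {b : L →ₗ[K] L →ₗ[K] L} {α β : L ≃ₗ[K] L}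

theorem superComm_map_map (hco : ∀ a : L, α (β a) = β (α a)) (i j : ZMod 2) (x y : L) :
    superComm b α β i j (β x) (α y)
      = b (β x) (α y) - ((-1 : K) ^ (i.val * j.val)) • b (β y) (α x) := by
  rw [superComm, ← hco, α.symm_apply_apply, β.symm_apply_apply]

variable {𝒜 : ZMod 2 → Submodule K L} [DirectSum.Decomposition 𝒜]

theorem superComm_eq_two_smul
    (hαe : ∀ (i : ZMod 2), ∀ x ∈ 𝒜 i, α x ∈ 𝒜 i)
    (hβe : ∀ (i : ZMod 2), ∀ x ∈ 𝒜 i, β x ∈ 𝒜 i)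
    (hco : ∀ a : L, α (β a) = β (α a))
    (hskew : ∀ (i j : ZMod 2), ∀ x ∈ 𝒜 i, ∀ y ∈ 𝒜 j,
      b (β x) (α y) = -(((-1 : K) ^ (i.val * j.val)) • b (β y) (α x)))
    {i j : ZMod 2} {x y : L} (hx : x ∈ 𝒜 i) (hy : y ∈ 𝒜 j) :
    superComm b α β i j x y = (2 : K) • b x y := by
  obtain ⟨x, rfl⟩ := β.surjective x
  obtain ⟨y, rfl⟩ := α.surjective y
  replace hx : x ∈ 𝒜 i := mem_of_map_mem_of_injective 𝒜 𝒜 hβe β.injective hx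
  replace hy : y ∈ 𝒜 j := mem_of_map_mem_of_injective 𝒜 𝒜 hαe α.injective hy
  rw [superComm_map_map hco, sub_eq_add_neg, ← hskew i j x hx y hy, two_smul]

theorem superComm_superComm_eq_four_smul
    (hb : ∀ (i j : ZMod 2), ∀ x ∈ 𝒜 i, ∀ y ∈ 𝒜 j, b x y ∈ 𝒜 (i + j))
    (hαe : ∀ (i : ZMod 2), ∀ x ∈ 𝒜 i, α x ∈ 𝒜 i)
    (hβe : ∀ (i : ZMod 2), ∀ x ∈ 𝒜 i, β x ∈ 𝒜 i)
    (hco : ∀ a : L, α (β a) = β (α a))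
    (hskew : ∀ (i j : ZMod 2), ∀ x ∈ 𝒜 i, ∀ y ∈ 𝒜 j,
      b (β x) (α y) = -(((-1 : K) ^ (i.val * j.val)) • b (β y) (α x)))
    {i j l : ZMod 2} {x y z : L} (hx : x ∈ 𝒜 i) (hy : y ∈ 𝒜 j) (hz : z ∈ 𝒜 l) :
    superComm b α β i (j + l) x (superComm b α β j l y z) = (4 : K) • b x (b y z) := by
  have hyz : (2 : K) • b y z ∈ 𝒜 (j + l) := Submodule.smul_mem _ _ (hb j l y hy z hz)
  calc superComm b α β i (j + l) x (superComm b α β j l y z)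
      = superComm b α β i (j + l) x ((2 : K) • b y z) := by
        rw [superComm_eq_two_smul hαe hβe hco hskew hy hz]
    _ = (2 : K) • b x ((2 : K) • b y z) := superComm_eq_two_smul hαe hβe hco hskew hx hyz
    _ = (4 : K) • b x (b y z) := by
        rw [map_smul, smul_smul]
        norm_num

theorem bihomLie_is_bihomLie_admissible_general
    (hb : ∀ (i j : ZMod 2), ∀ x ∈ 𝒜 i, ∀ y ∈ 𝒜 j, b x y ∈ 𝒜 (i + j))
    (hαe : ∀ (i : ZMod 2), ∀ x ∈ 𝒜 i, α x ∈ 𝒜 i)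
    (hβe : ∀ (i : ZMod 2), ∀ x ∈ 𝒜 i, β x ∈ 𝒜 i)
    (hco : ∀ a : L, α (β a) = β (α a))
    (hskew : ∀ (i j : ZMod 2), ∀ x ∈ 𝒜 i, ∀ y ∈ 𝒜 j,
      b (β x) (α y) = -(((-1 : K) ^ (i.val * j.val)) • b (β y) (α x)))
    (hjac : ∀ (i j l : ZMod 2), ∀ x ∈ 𝒜 i, ∀ y ∈ 𝒜 j, ∀ z ∈ 𝒜 l,
      ((-1 : K) ^ (i.val * l.val)) • b (β (β x)) (b (β y) (α z))
        + ((-1 : K) ^ (j.val * i.val)) • b (β (β y)) (b (β z) (α x))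
        + ((-1 : K) ^ (l.val * j.val)) • b (β (β z)) (b (β x) (α y)) = 0) :
    ∀ (i j l : ZMod 2), ∀ x ∈ 𝒜 i, ∀ y ∈ 𝒜 j, ∀ z ∈ 𝒜 l,
      ((-1 : K) ^ (i.val * l.val)) •
          superComm b α β i (j + l) (β (β x)) (superComm b α β j l (β y) (α z))
        + ((-1 : K) ^ (j.val * i.val)) •
          superComm b α β j (l + i) (β (β y)) (superComm b α β l i (β z) (α x))
        + ((-1 : K) ^ (l.val * j.val)) •
          superComm b α β l (i + j) (β (β z)) (superComm b α β i j (β x) (α y)) = 0 := by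
  intro i j l x hx y hy z hz
  have hnested {p q r : ZMod 2} {u v w : L} (hu : u ∈ 𝒜 p) (hv : v ∈ 𝒜 q) (hw : w ∈ 𝒜 r) :
      superComm b α β p (q + r) (β (β u)) (superComm b α β q r (β v) (α w))
        = (4 : K) • b (β (β u)) (b (β v) (α w)) :=
    superComm_superComm_eq_four_smul hb hαe hβe hco hskew
      (hβe p _ (hβe p u hu)) (hβe q v hv) (hαe r w hw)
  rw [hnested hx hy hz, hnested hy hz hx, hnested hz hx hy]
  simp only [smul_comm _ (4 : K), ← smul_add]
  rw [hjac i j l x hx y hy z hz, smul_zero]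

end SuperComm

/-- **Proposition 3.3.** Every BiHom-Lie superalgebra `(L, [·,·], α, β)` with bijective
`α`, `β` is BiHom-Lie admissible: the bracket
`[x, y]' = [x, y] − (−1)^{|x||y|}[α⁻¹(β(y)), α(β⁻¹(x))]` satisfies the
BiHom-superJacobi identity on homogeneous elements. -/
theorem bihomLie_is_bihomLie_admissible
    (K : Type*) [Field K] (L : Type*) [AddCommGroup L] [Module K L]
    (𝒜 : ZMod 2 → Submodule K L) [DirectSum.Decomposition 𝒜]
    (b : L →ₗ[K] L →ₗ[K] L) (α β : L ≃ₗ[K] L)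
    (hb : ∀ (i j : ZMod 2), ∀ x ∈ 𝒜 i, ∀ y ∈ 𝒜 j, b x y ∈ 𝒜 (i + j))
    (hαe : ∀ (i : ZMod 2), ∀ x ∈ 𝒜 i, α x ∈ 𝒜 i)
    (hβe : ∀ (i : ZMod 2), ∀ x ∈ 𝒜 i, β x ∈ 𝒜 i)
    (hco : ∀ a : L, α (β a) = β (α a))
    (hαh : ∀ x y : L, α (b x y) = b (α x) (α y))
    (hβh : ∀ x y : L, β (b x y) = b (β x) (β y))
    (hskew : ∀ (i j : ZMod 2), ∀ x ∈ 𝒜 i, ∀ y ∈ 𝒜 j,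
      b (β x) (α y) = -(((-1 : K) ^ (i.val * j.val)) • b (β y) (α x)))
    (hjac : ∀ (i j l : ZMod 2), ∀ x ∈ 𝒜 i, ∀ y ∈ 𝒜 j, ∀ z ∈ 𝒜 l,
      ((-1 : K) ^ (i.val * l.val)) • b (β (β x)) (b (β y) (α z))
        + ((-1 : K) ^ (j.val * i.val)) • b (β (β y)) (b (β z) (α x))
        + ((-1 : K) ^ (l.val * j.val)) • b (β (β z)) (b (β x) (α y)) = 0) :
    ∀ (i j l : ZMod 2), ∀ x ∈ 𝒜 i, ∀ y ∈ 𝒜 j, ∀ z ∈ 𝒜 l,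
      ((-1 : K) ^ (i.val * l.val)) •
          superComm b α β i (j + l) (β (β x)) (superComm b α β j l (β y) (α z))
        + ((-1 : K) ^ (j.val * i.val)) •
          superComm b α β j (l + i) (β (β y)) (superComm b α β l i (β z) (α x))
        + ((-1 : K) ^ (l.val * j.val)) •
          superComm b α β l (i + j) (β (β z)) (superComm b α β i j (β x) (α y)) = 0 :=
  bihomLie_is_bihomLie_admissible_general hb hαe hβe hco hskew hjac
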